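/- arXiv:1805.02715 — 2 statements merged into one kernel-verified Lean document; each statement's English description precedes it below -/
import Mathlib

section
/- If m, n ≥ 2 and m + n is odd, then aw(P_m □ P_n, 3) = 4; that is, every exact 4-coloring of the grid P_m □ P_n contains a rainbow 3-AP, while some exact 3-coloring does not. -/
open SimpleGraph

/-- `v` lists the vertices of a `k`-term arithmetic progression in `G`:
consecutive vertices are at a common distance `d`. -/
def IsAPIn {V : Type*} (G : SimpleGraph V) (k : ℕ) (v : Fin k → V) : Prop :=
  ∃ d : ℕ, ∀ (i : ℕ) (h : i + 1 < k),
    G.dist (v ⟨i, by omega⟩) (v ⟨i + 1, h⟩) = d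

/-- The coloring `c` admits a rainbow `k`-AP in `G`: a `k`-AP whose vertices
are pairwise distinct and receive pairwise distinct colors. -/
def HasRainbowAP {V α : Type*} (G : SimpleGraph V) (k : ℕ) (c : V → α) : Prop :=
  ∃ v : Fin k → V, IsAPIn G k v ∧ Function.Injective (c ∘ v)

/-- The anti-van der Waerden number `aw(G,k)`: the least positive `r` such that
every exact `r`-coloring of `G` contains a rainbow `k`-AP.  (For `r = |V(G)|+1`
there is no surjection onto `r` colors, so the defining set is nonempty and
`aw(G,k) ≤ |V(G)|+1` automatically, matching the convention.) -/
noncomputable def aw {V : Type*} [Fintype V] (G : SimpleGraph V) (k : ℕ) : ℕ :=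
  sInf {r : ℕ | 0 < r ∧ ∀ c : V → Fin r, Function.Surjective c → HasRainbowAP G k c}

/-!
**Lower bound.** Opposite corners of `P_m □ P_n` are each other's only farthest vertices, and since
`m + n` is odd no vertex is equidistant from them. Giving these corners private colors and
everything else a third color therefore leaves no rainbow 3-AP.

**Upper bound.** Take a rainbow-free coloring with at least four colors of a smallest possible grid
with `n ≤ m`. If `m > 2`, deleting the first or the last column loses a color by minimality, and
3-APs centered at vertices of these two colors show that each is used exactly once, at opposite
corners. The same holds trivially for the 2 × 2 grid, where all colors are distinct. But a color
used only at a corner forces all other vertices at distance less than `m` from that corner to share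
one color. Since `n ≤ m`, the two regions so obtained overlap and cover the rest of the grid, which
leaves only three colors.
-/

section General

variable {V W α β : Type*} {G : SimpleGraph V} {H : SimpleGraph W} {k r : ℕ} {c : V → α}

lemma hasRainbowAP_three_iff :
    HasRainbowAP G 3 c ↔
      ∃ u v w, G.dist u v = G.dist v w ∧ c u ≠ c v ∧ c v ≠ c w ∧ c u ≠ c w := by
  constructor
  · rintro ⟨p, ⟨d, hd⟩, hinj⟩
    exact ⟨p 0, p 1, p 2, (hd 0 (by omega)).trans (hd 1 (by omega)).symm,
      hinj.ne (by decide : (0 : Fin 3) ≠ 1), hinj.ne (by decide : (1 : Fin 3) ≠ 2),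
      hinj.ne (by decide : (0 : Fin 3) ≠ 2)⟩
  · rintro ⟨u, v, w, hd, huv, hvw, huw⟩
    refine ⟨![u, v, w], ⟨G.dist v w, fun i hi ↦ ?_⟩, ?_⟩
    · obtain rfl | rfl : i = 0 ∨ i = 1 := by omega
      exacts [hd, rfl]
    · intro i j hij
      fin_cases i <;> fin_cases j <;> simp_all

lemma HasRainbowAP.of_recoloring (f : α → β) (h : HasRainbowAP G k (f ∘ c)) :
    HasRainbowAP G k c :=
  let ⟨p, hp, hinj⟩ := h
  ⟨p, hp, Function.Injective.of_comp (f := f) hinj⟩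

lemma HasRainbowAP.of_isometry {φ : W → V} (hφ : ∀ u v, G.dist (φ u) (φ v) = H.dist u v)
    (h : HasRainbowAP H k (c ∘ φ)) : HasRainbowAP G k c :=
  let ⟨p, ⟨d, hd⟩, hinj⟩ := h
  ⟨φ ∘ p, ⟨d, fun i hi ↦ (hφ _ _).trans (hd i hi)⟩, hinj⟩

/-- Merging colors creates no rainbow AP, so it suffices to look at two consecutive numbers of
colors. -/
lemma aw_eq_succ [Fintype V]
    (hsucc : ∀ c : V → Fin (r + 1), Function.Surjective c → HasRainbowAP G k c)
    {c : V → Fin r} (hc : Function.Surjective c) (hfree : ¬ HasRainbowAP G k c) :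
    aw G k = r + 1 := by
  refine le_antisymm (Nat.sInf_le ⟨r.succ_pos, hsucc⟩)
    (le_csInf ⟨r + 1, r.succ_pos, hsucc⟩ fun s ⟨hs, hrainbow⟩ ↦ ?_)
  by_contra! hsr
  have : NeZero s := ⟨hs.ne'⟩
  have hmerge := Function.invFun_surjective (Fin.castLE_injective (Nat.le_of_lt_succ hsr))
  exact hfree ((hrainbow _ (hmerge.comp hc)).of_recoloring)

lemma exists_three_coloring_not_hasRainbowAP {a b x : V} (hxa : x ≠ a) (hxb : x ≠ b)
    (ha : ∀ w, G.dist a w = G.dist a b → w = b) (hb : ∀ w, G.dist b w = G.dist b a → w = a)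
    (hmid : ∀ w, G.dist a w ≠ G.dist w b) :
    ∃ c : V → Fin 3, Function.Surjective c ∧ ¬ HasRainbowAP G 3 c := by
  classical
  have hba : b ≠ a := by
    rintro rfl
    exact hmid b rfl
  let c : V → Fin 3 := fun v ↦ if v = a then 0 else if v = b then 1 else 2
  have hcolor (v : V) : v = a ∧ c v = 0 ∨ v = b ∧ c v = 1 ∨ c v = 2 := by grind
  refine ⟨c, fun i ↦ ?_, ?_⟩
  · fin_cases i
    exacts [⟨a, by simp [c]⟩, ⟨b, by simp [c, hba]⟩, ⟨x, by simp [c, hxa, hxb]⟩]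
  · rw [hasRainbowAP_three_iff]
    rintro ⟨u, v, w, hd, huv, hvw, huw⟩
    rcases hcolor v with ⟨rfl, -⟩ | ⟨rfl, -⟩ | hv
    · grind [ha u, ha w, hcolor u, hcolor w, G.dist_comm (u := u) (v := v)]
    · grind [hb u, hb w, hcolor u, hcolor w, G.dist_comm (u := u) (v := v)]
    · grind [hmid v, hcolor u, hcolor w, G.dist_comm (u := u) (v := v),
        G.dist_comm (u := v) (v := w)]

/-- The color of `a` is used at no other vertex. -/
def HasPrivateColor (c : V → α) (a : V) : Prop := ∀ p, c p = c a → p = a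

lemma HasPrivateColor.comp_of_injective {φ : W → V} (hφ : Function.Injective φ) {w : W}
    (h : HasPrivateColor c (φ w)) : HasPrivateColor (c ∘ φ) w :=
  fun p hp ↦ hφ (h (φ p) hp)

lemma HasPrivateColor.eq_of_dist_center_eq {a p q : V} (ha : HasPrivateColor c a)
    (hc : ¬ HasRainbowAP G 3 c) (hp : p ≠ a) (hq : q ≠ a) (hd : G.dist p a = G.dist a q) :
    c p = c q := by
  by_contra hpq
  exact hc (hasRainbowAP_three_iff.2 ⟨p, a, q, hd, mt (ha p) hp, fun h ↦ hq (ha q h.symm), hpq⟩)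

lemma HasPrivateColor.eq_of_dist_end_eq {a p q : V} (ha : HasPrivateColor c a)
    (hc : ¬ HasRainbowAP G 3 c) (hp : p ≠ a) (hq : q ≠ a) (hd : G.dist a p = G.dist p q) :
    c p = c q := by
  by_contra hpq
  exact hc (hasRainbowAP_three_iff.2
    ⟨a, p, q, hd, fun h ↦ hp (ha p h.symm), hpq, fun h ↦ hq (ha q h.symm)⟩)

lemma exists_color_avoiding_range {φ : W → V}
    (hφ : ∀ u v, G.dist (φ u) (φ v) = H.dist u v)
    (hH : ∀ c : W → α, Function.Surjective c → HasRainbowAP H k c)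
    (hsurj : Function.Surjective c) (hc : ¬ HasRainbowAP G k c) :
    ∃ a, ∀ p, c p = c a → p ∉ Set.range φ := by
  have hns : ¬ Function.Surjective (c ∘ φ) := fun h ↦ hc ((hH _ h).of_isometry hφ)
  simp only [Function.Surjective, not_forall, not_exists] at hns
  obtain ⟨i, hi⟩ := hns
  obtain ⟨a, rfl⟩ := hsurj i
  refine ⟨a, ?_⟩
  rintro _ hp ⟨w, rfl⟩
  exact hi w hp

lemma dist_boxProd {x y : V × W} (hG : G.Reachable x.1 y.1) (hH : H.Reachable x.2 y.2) :
    (G □ H).dist x y = G.dist x.1 y.1 + H.dist x.2 y.2 := by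
  have h := (reachable_boxProd.2 ⟨hG, hH⟩).coe_dist_eq_edist
  rw [edist_boxProd, ← hG.coe_dist_eq_edist, ← hH.coe_dist_eq_edist] at h
  exact_mod_cast h

end General

section Grid

variable {m n : ℕ}

lemma natDist_le_length_of_pathGraph_walk {a b : Fin n} (p : (pathGraph n).Walk a b) :
    Nat.dist a b ≤ p.length := by
  induction p with
  | nil => simp
  | cons h p ih =>
    rw [pathGraph_adj] at h
    rw [Walk.length_cons]
    unfold Nat.dist at *
    omega

lemma dist_pathGraph_le_sub {a b : Fin n} (hab : a ≤ b) :
    (pathGraph n).dist a b ≤ b - a := by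
  obtain ⟨d, hd⟩ := Nat.exists_eq_add_of_le (Fin.le_def.1 hab)
  induction d generalizing b with
  | zero => simp [Fin.ext hd]
  | succ d ih =>
    let b' : Fin n := ⟨a + d, by omega⟩
    have hadj : (pathGraph n).Adj b' b := pathGraph_adj.2 (.inl (by simp only [b']; omega))
    have hle : (pathGraph n).dist a b' ≤ b' - a := ih (Fin.le_def.2 (by simp [b'])) rfl
    calc (pathGraph n).dist a b
        ≤ (pathGraph n).dist a b' + (pathGraph n).dist b' b :=
          (pathGraph_preconnected n a b').dist_triangle_left b
      _ ≤ (b' - a) + 1 := Nat.add_le_add hle (dist_eq_one_iff_adj.2 hadj).le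
      _ = b - a := by simp only [b']; omega

lemma dist_pathGraph (a b : Fin n) : (pathGraph n).dist a b = Nat.dist a b := by
  apply le_antisymm
  · rcases le_total a b with hab | hba
    · exact (dist_pathGraph_le_sub hab).trans (by simp [Nat.dist])
    · rw [dist_comm]
      exact (dist_pathGraph_le_sub hba).trans (by simp [Nat.dist])
  · obtain ⟨p, hp⟩ := (pathGraph_preconnected n a b).exists_walk_length_eq_dist
    exact hp ▸ natDist_le_length_of_pathGraph_walk p

lemma dist_grid (u v : Fin m × Fin n) :
    (pathGraph m □ pathGraph n).dist u v = Nat.dist u.1 v.1 + Nat.dist u.2 v.2 := by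
  rw [dist_boxProd (pathGraph_preconnected m _ _) (pathGraph_preconnected n _ _),
    dist_pathGraph, dist_pathGraph]

lemma dist_grid_map {k l : ℕ} {f : Fin k → Fin m} {g : Fin l → Fin n}
    (hf : ∀ i j, Nat.dist (f i) (f j) = Nat.dist i j)
    (hg : ∀ i j, Nat.dist (g i) (g j) = Nat.dist i j) (u v : Fin k × Fin l) :
    (pathGraph m □ pathGraph n).dist (Prod.map f g u) (Prod.map f g v) =
      (pathGraph k □ pathGraph l).dist u v := by
  simp only [dist_grid, Prod.map_fst, Prod.map_snd, hf, hg]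

lemma dist_grid_swap (u v : Fin m × Fin n) :
    (pathGraph n □ pathGraph m).dist u.swap v.swap = (pathGraph m □ pathGraph n).dist u v := by
  simp only [dist_grid, Prod.fst_swap, Prod.snd_swap, add_comm]

lemma natDist_finRev (i j : Fin n) : Nat.dist i.rev j.rev = Nat.dist i j := by
  simp only [Nat.dist, Fin.val_rev]
  omega

lemma exists_three_coloring_grid (hm : 1 ≤ m) (hn : 1 ≤ n) (hodd : Odd (m + n)) :
    ∃ c : Fin (m + 1) × Fin (n + 1) → Fin 3, Function.Surjective c ∧
      ¬ HasRainbowAP (pathGraph (m + 1) □ pathGraph (n + 1)) 3 c := by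
  obtain ⟨k, hk⟩ := hodd
  refine exists_three_coloring_not_hasRainbowAP (a := (0, 0)) (b := (Fin.last m, Fin.last n))
    (x := (0, Fin.last n)) ?_ ?_ ?_ ?_ ?_
  · simpa [Fin.ext_iff] using Nat.ne_of_gt hn
  · simpa [Fin.ext_iff] using Nat.ne_of_lt hm
  all_goals
    rintro ⟨x, y⟩
    simp only [dist_grid, Nat.dist, Prod.mk.injEq, Fin.ext_iff, Fin.val_zero, Fin.val_last]
    omega

variable {α : Type*} {c : Fin (m + 1) × Fin (n + 1) → α}

/-- Writing `s` for the coordinate sum of `p`, an AP centered at `(0, 0)` moves `p` along its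
antidiagonal to `(s, 0)`, which is in turn the center of an AP from `(0, 0)` to `(1, 1)`. -/
lemma eq_one_one_of_hasPrivateColor_zero
    (hc : ¬ HasRainbowAP (pathGraph (m + 1) □ pathGraph (n + 1)) 3 c) (hm : 1 ≤ m) (hn : 1 ≤ n)
    (h₀ : HasPrivateColor c (0, 0)) {p : Fin (m + 1) × Fin (n + 1)} (hp : p ≠ (0, 0))
    (hpm : (p.1 + p.2 : ℕ) ≤ m) : c p = c (⟨1, by omega⟩, ⟨1, by omega⟩) := by
  let s : Fin (m + 1) := ⟨p.1 + p.2, by omega⟩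
  have hs : (s, (0 : Fin (n + 1))) ≠ (0, 0) := by
    simp only [ne_eq, Prod.ext_iff, Fin.ext_iff, Fin.val_zero, s] at hp ⊢
    omega
  have hs_one_one : Nat.dist 0 s = Nat.dist s 1 + Nat.dist 0 1 := by
    simp only [ne_eq, Prod.ext_iff, Fin.ext_iff, Fin.val_zero] at hp
    simp only [Nat.dist, s]
    omega
  calc c p = c (s, 0) := h₀.eq_of_dist_center_eq hc hp hs (by simp [dist_grid, Nat.dist, s])
    _ = c (⟨1, by omega⟩, ⟨1, by omega⟩) := h₀.eq_of_dist_end_eq hc hs (by simp [Fin.ext_iff])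
        (by simpa [dist_grid] using hs_one_one)

lemma eq_rev_one_rev_one_of_hasPrivateColor_last
    (hc : ¬ HasRainbowAP (pathGraph (m + 1) □ pathGraph (n + 1)) 3 c) (hm : 1 ≤ m) (hn : 1 ≤ n)
    (h₁ : HasPrivateColor c (Fin.last m, Fin.last n)) {p : Fin (m + 1) × Fin (n + 1)}
    (hp : p ≠ (Fin.last m, Fin.last n)) (hpn : n ≤ (p.1 + p.2 : ℕ)) :
    c p = c (Fin.rev ⟨1, by omega⟩, Fin.rev ⟨1, by omega⟩) := by
  let ρ : Fin (m + 1) × Fin (n + 1) → Fin (m + 1) × Fin (n + 1) := Prod.map Fin.rev Fin.rev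
  have hρρ : Function.Involutive ρ := Fin.rev_involutive.prodMap Fin.rev_involutive
  have hρ₀ : ρ (0, 0) = (Fin.last m, Fin.last n) := by simp [ρ]
  have hcρ : ¬ HasRainbowAP (pathGraph (m + 1) □ pathGraph (n + 1)) 3 (c ∘ ρ) :=
    mt (HasRainbowAP.of_isometry (dist_grid_map natDist_finRev natDist_finRev)) hc
  have hρp : ρ p ≠ (0, 0) := fun h ↦ hp (by rw [← hρρ p, h, hρ₀])
  have h := eq_one_one_of_hasPrivateColor_zero hcρ hm hn
    (HasPrivateColor.comp_of_injective hρρ.injective (by rwa [hρ₀])) hρp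
    (by simp only [ρ, Prod.map_fst, Prod.map_snd, Fin.val_rev]; omega)
  rwa [Function.comp_apply, hρρ p] at h

lemma card_le_three_of_hasPrivateColor_corners [Fintype α] (hsurj : Function.Surjective c)
    (hc : ¬ HasRainbowAP (pathGraph (m + 1) □ pathGraph (n + 1)) 3 c) (hn : 1 ≤ n) (hnm : n ≤ m)
    (h₀ : HasPrivateColor c (0, 0)) (h₁ : HasPrivateColor c (Fin.last m, Fin.last n)) :
    Fintype.card α ≤ 3 := by
  let q : Fin (m + 1) × Fin (n + 1) := (⟨n, by omega⟩, 0)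
  have hq₀ : q ≠ (0, 0) := by simpa [q, Fin.ext_iff] using Nat.ne_of_gt hn
  have hq₁ : q ≠ (Fin.last m, Fin.last n) := fun h ↦
    Nat.ne_of_lt hn (congrArg (Fin.val ∘ Prod.snd) h)
  have hrest (p) (hp₀ : p ≠ (0, 0)) (hp₁ : p ≠ (Fin.last m, Fin.last n)) : c p = c q := by
    rcases le_total (p.1 + p.2 : ℕ) m with h | h
    · have low {p} := eq_one_one_of_hasPrivateColor_zero hc (hn.trans hnm) hn h₀ (p := p)
      exact (low hp₀ h).trans (low hq₀ (by simpa [q] using hnm)).symm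
    · have high {p} := eq_rev_one_rev_one_of_hasPrivateColor_last hc (hn.trans hnm) hn h₁ (p := p)
      exact (high hp₁ (hnm.trans h)).trans (high hq₁ (by simp [q])).symm
  have hcolors : Function.Surjective ![c (0, 0), c (Fin.last m, Fin.last n), c q] := fun i ↦ by
    obtain ⟨p, rfl⟩ := hsurj i
    by_cases hp₀ : p = (0, 0)
    · exact ⟨0, by simp [hp₀]⟩
    by_cases hp₁ : p = (Fin.last m, Fin.last n)
    · exact ⟨1, by simp [hp₁]⟩
    · exact ⟨2, (hrest p hp₀ hp₁).symm⟩
  simpa using Fintype.card_le_of_surjective _ hcolors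

/-- Otherwise some vertex `q` in the second or the second to last column is as far from `b`,
respectively `a`, as these are from each other, and `a`, `b`, `q` form a rainbow AP. -/
lemma opposite_corners_of_side_colors
    (hc : ¬ HasRainbowAP (pathGraph (m + 1) □ pathGraph (n + 1)) 3 c) (hm : 2 ≤ m) (hn : 1 ≤ n)
    {a b : Fin (m + 1) × Fin (n + 1)} (ha : ∀ p, c p = c a → p.1 = 0)
    (hb : ∀ p, c p = c b → p.1 = Fin.last m) :
    a = (0, 0) ∧ b = (Fin.last m, Fin.last n) ∨ a = (0, Fin.last n) ∧ b = (Fin.last m, 0) := by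
  have ha₀ : (a.1 : ℕ) = 0 := by simp [ha a rfl]
  have hb₁ : (b.1 : ℕ) = m := by simp [hb b rfl]
  have hab : c a ≠ c b := fun h ↦ by
    have := congrArg Fin.val (hb a h)
    rw [Fin.val_last] at this
    omega
  have hinterior (x y : ℕ) (hx : 0 < x) (hxm : x < m) (hy : y < n + 1) :
      Nat.dist a.1 b.1 + Nat.dist a.2 b.2 ≠ Nat.dist a.1 x + Nat.dist a.2 y ∧
        Nat.dist a.1 b.1 + Nat.dist a.2 b.2 ≠ Nat.dist b.1 x + Nat.dist b.2 y := by
    let q : Fin (m + 1) × Fin (n + 1) := (⟨x, by omega⟩, ⟨y, hy⟩)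
    have hqa : c a ≠ c q := fun h ↦ hx.ne' (congrArg Fin.val (ha q h.symm))
    have hqb : c b ≠ c q := fun h ↦ hxm.ne (congrArg Fin.val (hb q h.symm))
    constructor <;> intro hd
    · refine hc (hasRainbowAP_three_iff.2 ⟨b, a, q, ?_, hab.symm, hqa, hqb⟩)
      rwa [dist_comm, dist_grid, dist_grid]
    · refine hc (hasRainbowAP_three_iff.2 ⟨a, b, q, ?_, hab, hqb, hqa⟩)
      rwa [dist_grid, dist_grid]
  have hright (y : ℕ) (hy : y < n + 1) := (hinterior (m - 1) y (by omega) (by omega) hy).1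
  have hleft (y : ℕ) (hy : y < n + 1) := (hinterior 1 y (by omega) (by omega) hy).2
  have hright_succ := hright (b.2 + 1)
  have hright_pred := hright (b.2 - 1) (by omega)
  have hleft_succ := hleft (a.2 + 1)
  have hleft_pred := hleft (a.2 - 1) (by omega)
  simp only [Nat.dist] at hright_succ hright_pred hleft_succ hleft_pred
  simp only [Prod.ext_iff, Fin.ext_iff, Fin.val_zero, Fin.val_last]
  omega

lemma hasPrivateColor_of_side_colors
    (hc : ¬ HasRainbowAP (pathGraph (m + 1) □ pathGraph (n + 1)) 3 c) (hm : 2 ≤ m) (hn : 1 ≤ n)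
    {a b : Fin (m + 1) × Fin (n + 1)} (ha : ∀ p, c p = c a → p.1 = 0)
    (hb : ∀ p, c p = c b → p.1 = Fin.last m) : HasPrivateColor c a ∧ HasPrivateColor c b := by
  have : (0 : Fin (n + 1)) ≠ Fin.last n := by
    simpa [Fin.ext_iff] using Nat.ne_of_lt hn
  have := opposite_corners_of_side_colors hc hm hn ha hb
  constructor <;> intro p hp
  · have := opposite_corners_of_side_colors hc hm hn (a := p) (by rwa [hp]) hb
    grind
  · have := opposite_corners_of_side_colors hc hm hn (b := p) ha (by rwa [hp])
    grind

lemma card_le_three_of_side_colors [Fintype α] (hsurj : Function.Surjective c)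
    (hc : ¬ HasRainbowAP (pathGraph (m + 1) □ pathGraph (n + 1)) 3 c)
    (hm : 2 ≤ m) (hn : 1 ≤ n) (hnm : n ≤ m) {a b : Fin (m + 1) × Fin (n + 1)}
    (ha : ∀ p, c p = c a → p.1 = 0) (hb : ∀ p, c p = c b → p.1 = Fin.last m) :
    Fintype.card α ≤ 3 := by
  obtain ⟨hpa, hpb⟩ := hasPrivateColor_of_side_colors hc hm hn ha hb
  rcases opposite_corners_of_side_colors hc hm hn ha hb with ⟨rfl, rfl⟩ | ⟨rfl, rfl⟩
  · exact card_le_three_of_hasPrivateColor_corners hsurj hc hn hnm hpa hpb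
  · let ρ : Fin (m + 1) × Fin (n + 1) → Fin (m + 1) × Fin (n + 1) := Prod.map id Fin.rev
    have hρρ : Function.Involutive ρ := Function.Involutive.prodMap (fun _ ↦ rfl) Fin.rev_involutive
    have hcρ : ¬ HasRainbowAP (pathGraph (m + 1) □ pathGraph (n + 1)) 3 (c ∘ ρ) :=
      mt (HasRainbowAP.of_isometry (dist_grid_map (fun _ _ ↦ rfl) natDist_finRev)) hc
    exact card_le_three_of_hasPrivateColor_corners (hsurj.comp hρρ.surjective) hcρ hn hnm
      (HasPrivateColor.comp_of_injective hρρ.injective (by simpa [ρ] using hpa))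
      (HasPrivateColor.comp_of_injective hρρ.injective (by simpa [ρ] using hpb))

theorem hasRainbowAP_grid_of_three_lt_card [Fintype α] (hα : 3 < Fintype.card α)
    (hm : 1 ≤ m) (hn : 1 ≤ n) (hsurj : Function.Surjective c) :
    HasRainbowAP (pathGraph (m + 1) □ pathGraph (n + 1)) 3 c := by
  induction hN : m + n using Nat.strong_induction_on generalizing m n with
  | _ N ih =>
  subst hN
  by_contra hc
  wlog hnm : n ≤ m generalizing m n
  · refine this hn hm (hsurj.comp Prod.swap_surjective) ?_ ?_ (Nat.le_of_not_le hnm)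
    · exact fun k hk ↦ ih k (by omega)
    · exact mt (HasRainbowAP.of_isometry dist_grid_swap) hc
  apply hα.not_ge
  obtain rfl | hm₂ : m = 1 ∨ 2 ≤ m := by omega
  · obtain rfl : n = 1 := by omega
    have hinj : Function.Injective c :=
      (hsurj.bijective_of_nat_card_le (by simpa [Nat.succ_le_iff] using hα)).injective
    exact card_le_three_of_hasPrivateColor_corners hsurj hc hn hnm (fun _ h ↦ hinj h)
      (fun _ h ↦ hinj h)
  · obtain ⟨m, rfl⟩ := Nat.exists_eq_add_of_le' hm
    have hsmaller (c : Fin (m + 1) × Fin (n + 1) → α) (hc : Function.Surjective c) :=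
      ih (m + n) (by omega) (by omega) hn hc rfl
    obtain ⟨a, ha⟩ := exists_color_avoiding_range (φ := Prod.map Fin.succ id)
      (dist_grid_map (fun _ _ ↦ by simp [Nat.dist_add_add_right]) (fun _ _ ↦ rfl))
      hsmaller hsurj hc
    obtain ⟨b, hb⟩ := exists_color_avoiding_range (φ := Prod.map Fin.castSucc id)
      (dist_grid_map (fun _ _ ↦ rfl) (fun _ _ ↦ rfl)) hsmaller hsurj hc
    refine card_le_three_of_side_colors hsurj hc hm₂ hn hnm (a := a) (b := b) ?_ ?_
    · refine fun p hp ↦ by_contra fun hp₀ ↦ ha p hp ⟨(p.1.pred hp₀, p.2), ?_⟩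
      simp
    · refine fun p hp ↦ by_contra fun hp₁ ↦ hb p hp ⟨(p.1.castPred hp₁, p.2), ?_⟩
      simp

end Grid

/-- if `m, n ≥ 2` and `m + n` is odd, then `aw(P_m □ P_n, 3) = 4`. -/
theorem aw_eq_four_of_odd (m n : ℕ) (hm : 2 ≤ m) (hn : 2 ≤ n) (hodd : Odd (m + n)) :
    aw (pathGraph m □ pathGraph n) 3 = 4 := by
  obtain ⟨m, rfl⟩ := Nat.exists_eq_add_of_le' (one_le_two.trans hm)
  obtain ⟨n, rfl⟩ := Nat.exists_eq_add_of_le' (one_le_two.trans hn)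
  obtain ⟨c, hsurj, hfree⟩ := exists_three_coloring_grid (m := m) (n := n) (by omega) (by omega)
    (by grind)
  refine aw_eq_succ (fun c hc ↦ ?_) hsurj hfree
  exact hasRainbowAP_grid_of_three_lt_card (by simp) (by omega) (by omega) hc
end

section
/- If m ≥ 4 and n ≥ 4, then aw(P_m □ P_n, 3) = 4; that is, every exact 4-coloring of the grid P_m □ P_n contains a rainbow 3-AP, while some exact 3-coloring does not. -/
open SimpleGraph

/-!
For the upper bound, suppose a rainbow-free coloring of a grid uses four colors while those of the
grid with one row fewer use at most three. Deleting the last or the first row then loses a color,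
so some color lives only in the last row and another only in the first. Comparing distances with
vertices in between forces each of these colors to occur at a single vertex, at opposite corners.
Around a corner with a color of its own, all vertices at positive even distance share a color, which
the opposite corner must avoid. So the two corners are at odd distance, the even levels around one
are the odd levels around the other, and just one further color is left.

For the lower bound, color a corner, the other vertices at a fixed odd distance `D` from it, and the
remaining vertices with three different colors. Up to reversal, a rainbow progression must start at
the corner and contain exactly one vertex at distance `D`. This cannot be its last vertex, since the
grid is bipartite, nor its middle vertex, since for `D` close to the diameter the corner is the only
vertex at distance `D` from it.
-/

/-- The grid `P_m □ P_n`. -/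
abbrev gridGraph (m n : ℕ) : SimpleGraph (Fin m × Fin n) :=
  pathGraph m □ pathGraph n

/-- No vertex other than `a` receives the color of `a`; the extremal colorings of a grid are
governed by such vertices. -/
def IsUniquelyColored {V α : Type*} (c : V → α) (a : V) : Prop :=
  ∀ x, c x = c a → x = a

/-- The three-coloring of `G` in which `a` gets color `0`, the other vertices at distance `D` from
`a` get color `1`, and all remaining vertices get color `2`. It supplies the lower bound. -/
noncomputable def sphereColoring {V : Type*} (G : SimpleGraph V) (a : V) (D : ℕ) (x : V) : Fin 3 :=
  open Classical in if x = a then 0 else if G.dist a x = D then 1 else 2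

section General

variable {V W α β : Type*} {G : SimpleGraph V} {H : SimpleGraph W} {k : ℕ} {c : V → α} {a x y : V}

lemma HasRainbowAP.of_comp_left {g : α → β} (h : HasRainbowAP G k (g ∘ c)) :
    HasRainbowAP G k c := by
  obtain ⟨v, hv, hinj⟩ := h
  exact ⟨v, hv, Function.Injective.of_comp (f := g) hinj⟩

lemma HasRainbowAP.of_comp_right {φ : W → V} (hφ : ∀ x y, G.dist (φ x) (φ y) = H.dist x y)
    (h : HasRainbowAP H k (c ∘ φ)) : HasRainbowAP G k c := by
  obtain ⟨v, ⟨d, hd⟩, hinj⟩ := h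
  exact ⟨φ ∘ v, ⟨d, fun i hi ↦ (hφ _ _).trans (hd i hi)⟩, hinj⟩

lemma not_hasRainbowAP_three_iff : ¬ HasRainbowAP G 3 c ↔
    ∀ x y z, G.dist x y = G.dist y z → c x = c y ∨ c y = c z ∨ c x = c z := by
  constructor
  · intro hc x y z h
    by_contra! hne
    obtain ⟨hxy, hyz, hxz⟩ := hne
    refine hc ⟨![x, y, z], ⟨G.dist x y, fun i hi ↦ ?_⟩, fun i j hij ↦ ?_⟩
    · obtain rfl | rfl : i = 0 ∨ i = 1 := by omega
      exacts [rfl, h.symm]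
    · fin_cases i <;> fin_cases j <;> simp_all
  · rintro hc ⟨v, ⟨d, hd⟩, hinj⟩
    rcases hc (v 0) (v 1) (v 2) ((hd 0 (by omega)).trans (hd 1 (by omega)).symm) with h | h | h
    · exact absurd (hinj (a₁ := 0) (a₂ := 1) h) (by decide)
    · exact absurd (hinj (a₁ := 1) (a₂ := 2) h) (by decide)
    · exact absurd (hinj (a₁ := 0) (a₂ := 2) h) (by decide)

lemma aw_le [Fintype V] {r : ℕ} (hr : 0 < r)
    (h : ∀ c : V → Fin r, Function.Surjective c → HasRainbowAP G k c) : aw G k ≤ r :=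
  Nat.sInf_le ⟨hr, h⟩

lemma lt_aw [Fintype V] {r : ℕ} {c : V → Fin r} (hsurj : Function.Surjective c)
    (hc : ¬ HasRainbowAP G k c) : r < aw G k := by
  have hne : {r : ℕ | 0 < r ∧ ∀ c : V → Fin r, Function.Surjective c →
      HasRainbowAP G k c}.Nonempty := by
    refine ⟨Fintype.card V + 1, Nat.succ_pos _, fun c hsurj ↦ ?_⟩
    have := Fintype.card_le_of_surjective c hsurj
    simp at this
  refine lt_of_not_ge fun hle ↦ ?_
  obtain ⟨hpos, h⟩ := Nat.sInf_mem hne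
  have : NeZero (aw G k) := ⟨hpos.ne'⟩
  -- Merging colors turns `c` into a rainbow-free exact coloring with `aw G k` colors.
  have hmerge : Function.Surjective (Function.invFun (Fin.castLE hle)) :=
    Function.invFun_surjective (Fin.castLE_injective hle)
  exact hc (h _ (hmerge.comp hsurj)).of_comp_left

lemma IsUniquelyColored.comp {φ : W → V} (ha : IsUniquelyColored c a)
    (hφ : Function.Injective φ) {b : W} (hb : φ b = a) : IsUniquelyColored (c ∘ φ) b :=
  fun _ hx ↦ hφ ((ha _ (hx.trans (congrArg c hb))).trans hb.symm)

lemma IsUniquelyColored.color_eq_of_dist_eq (ha : IsUniquelyColored c a)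
    (hc : ¬ HasRainbowAP G 3 c) (hx : x ≠ a) (hy : y ≠ a) (h : G.dist a x = G.dist a y) :
    c x = c y := by
  rw [G.dist_comm] at h
  rcases not_hasRainbowAP_three_iff.1 hc x a y h with h' | h' | h'
  exacts [absurd (ha x h') hx, absurd (ha y h'.symm) hy, h']

lemma IsUniquelyColored.color_eq_of_dist_eq_dist (ha : IsUniquelyColored c a)
    (hc : ¬ HasRainbowAP G 3 c) (hx : x ≠ a) (hy : y ≠ a) (h : G.dist a x = G.dist x y) :
    c x = c y := by
  rcases not_hasRainbowAP_three_iff.1 hc a x y h with h' | h' | h'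
  exacts [absurd (ha x h'.symm) hx, h', absurd (ha y h'.symm) hy]

lemma sphereColoring_eq_zero_iff {D : ℕ} : sphereColoring G a D x = 0 ↔ x = a := by
  unfold sphereColoring
  split_ifs <;> simp_all

lemma sphereColoring_of_ne {D : ℕ} (h : x ≠ a) :
    sphereColoring G a D x = if G.dist a x = D then 1 else 2 := by
  simp [sphereColoring, h]

lemma not_hasRainbowAP_sphereColoring {D : ℕ}
    (hmid : ∀ y z, G.dist a z = D → G.dist a y ≠ G.dist y z)
    (hsphere : ∀ y z, G.dist a y = D → G.dist y z = D → z = a ∨ G.dist a z = D) :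
    ¬ HasRainbowAP G 3 (sphereColoring G a D) := by
  set c := sphereColoring G a D with hc
  have color_eq {y z} (hy : y ≠ a) (hz : z ≠ a) (h : G.dist a y = D ↔ G.dist a z = D) :
      c y = c z := by
    simp only [hc, sphereColoring_of_ne hy, sphereColoring_of_ne hz, h]
  have color_eq_of_end {y z} (hy : y ≠ a) (hz : z ≠ a) (h : G.dist a y = G.dist y z) :
      c y = c z := by
    refine color_eq hy hz ⟨fun hyD ↦ ?_, fun hzD ↦ absurd h (hmid y z hzD)⟩
    exact (hsphere y z hyD (h ▸ hyD)).resolve_left hz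
  rw [not_hasRainbowAP_three_iff]
  intro x y z h
  by_contra! hne
  obtain ⟨hxy, hyz, hxz⟩ := hne
  have ne_of {u v} (huv : c u ≠ c v) (hu : c u = 0) : v ≠ a :=
    fun hv ↦ huv (hu.trans (sphereColoring_eq_zero_iff.2 hv).symm)
  have h0 : c x = 0 ∨ c y = 0 ∨ c z = 0 := by omega
  rcases h0 with hx | hy | hz
  · obtain rfl := sphereColoring_eq_zero_iff.1 hx
    exact hyz (color_eq_of_end (ne_of hxy hx) (ne_of hxz hx) h)
  · obtain rfl := sphereColoring_eq_zero_iff.1 hy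
    rw [G.dist_comm] at h
    exact hxz (color_eq (ne_of hxy.symm hy) (ne_of hyz hy) (by rw [h]))
  · obtain rfl := sphereColoring_eq_zero_iff.1 hz
    rw [eq_comm, G.dist_comm, G.dist_comm (u := x)] at h
    exact hxy (color_eq_of_end (ne_of hyz.symm hz) (ne_of hxz.symm hz) h).symm

lemma sphereColoring_surjective {D : ℕ} (hx : x ≠ a) (hxD : G.dist a x = D) (hy : y ≠ a)
    (hyD : G.dist a y ≠ D) : Function.Surjective (sphereColoring G a D) := by
  rw [Function.Surjective, Fin.forall_fin_succ, Fin.forall_fin_two]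
  refine ⟨⟨a, sphereColoring_eq_zero_iff.2 rfl⟩, ⟨x, ?_⟩, ⟨y, ?_⟩⟩
  · rw [sphereColoring_of_ne hx, if_pos hxD]; rfl
  · rw [sphereColoring_of_ne hy, if_neg hyD]; rfl

end General

section Distance

variable {m n : ℕ}

lemma natAbs_sub_le_length_of_pathGraph_walk {u v : Fin n} (w : (pathGraph n).Walk u v) :
    ((u : ℤ) - v).natAbs ≤ w.length := by
  induction w with
  | nil => simp
  | cons h w ih =>
    rw [pathGraph_adj] at h
    rw [Walk.length_cons]
    omega

lemma exists_pathGraph_walk_length_eq (k : ℕ) {u v : Fin n} (h : (u : ℕ) + k = v) :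
    ∃ w : (pathGraph n).Walk u v, w.length = k := by
  induction k generalizing u with
  | zero =>
    obtain rfl : u = v := Fin.ext h
    exact ⟨.nil, rfl⟩
  | succ k ih =>
    obtain ⟨w, hw⟩ := ih (u := ⟨u + 1, by omega⟩) (by simp only; omega)
    exact ⟨.cons (pathGraph_adj.2 (.inl rfl)) w, by rw [Walk.length_cons, hw]⟩

lemma dist_pathGraph_s18 (u v : Fin n) : (pathGraph n).dist u v = ((u : ℤ) - v).natAbs := by
  apply le_antisymm
  · wlog huv : (u : ℕ) ≤ v generalizing u v
    · rw [dist_comm, ← Int.natAbs_neg, neg_sub]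
      exact this v u (by omega)
    obtain ⟨w, hw⟩ := exists_pathGraph_walk_length_eq (v - u : ℕ) (Nat.add_sub_of_le huv)
    have := dist_le w
    omega
  · obtain ⟨w, hw⟩ := (pathGraph_preconnected n u v).exists_walk_length_eq_dist
    exact hw ▸ natAbs_sub_le_length_of_pathGraph_walk w

lemma dist_boxProd_of_preconnected {V W : Type*} {G : SimpleGraph V} {H : SimpleGraph W}
    (hG : G.Preconnected) (hH : H.Preconnected) (x y : V × W) :
    (G □ H).dist x y = G.dist x.1 y.1 + H.dist x.2 y.2 := by
  rw [SimpleGraph.dist, edist_boxProd, ← (hG x.1 y.1).coe_dist_eq_edist,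
    ← (hH x.2 y.2).coe_dist_eq_edist, ← Nat.cast_add, ENat.toNat_natCast]

lemma dist_gridGraph (x y : Fin m × Fin n) : (gridGraph m n).dist x y =
    ((x.1 : ℤ) - y.1).natAbs + ((x.2 : ℤ) - y.2).natAbs := by
  rw [dist_boxProd_of_preconnected (pathGraph_preconnected m) (pathGraph_preconnected n),
    dist_pathGraph_s18, dist_pathGraph_s18]

lemma dist_gridGraph_zero_left (x : Fin (m + 1) × Fin (n + 1)) :
    (gridGraph (m + 1) (n + 1)).dist 0 x = x.1 + x.2 := by
  simp [dist_gridGraph]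

lemma level_pos_iff {x : Fin (m + 1) × Fin (n + 1)} : 0 < (x.1 + x.2 : ℕ) ↔ x ≠ 0 := by
  rw [Nat.pos_iff_ne_zero, ne_eq, Nat.add_eq_zero_iff, Fin.val_eq_zero_iff, Fin.val_eq_zero_iff,
    ← Prod.mk_eq_zero]

lemma dist_gridGraph_prodMap {m' n' : ℕ} {f : Fin m → Fin m'} {g : Fin n → Fin n'}
    (hf : ∀ u v, ((f u : ℤ) - f v).natAbs = ((u : ℤ) - v).natAbs)
    (hg : ∀ u v, ((g u : ℤ) - g v).natAbs = ((u : ℤ) - v).natAbs) (x y : Fin m × Fin n) :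
    (gridGraph m' n').dist (Prod.map f g x) (Prod.map f g y) = (gridGraph m n).dist x y := by
  simp [dist_gridGraph, hf, hg]

lemma dist_gridGraph_swap (x y : Fin m × Fin n) :
    (gridGraph n m).dist x.swap y.swap = (gridGraph m n).dist x y := by
  simp [dist_gridGraph, add_comm]

lemma natAbs_rev_sub_rev (u v : Fin n) :
    ((u.rev : ℤ) - v.rev).natAbs = ((u : ℤ) - v).natAbs := by
  simp only [Fin.val_rev]
  omega

lemma natAbs_succ_sub_succ (u v : Fin n) :
    ((u.succ : ℤ) - v.succ).natAbs = ((u : ℤ) - v).natAbs := by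
  simp

end Distance

section OppositeCorners

variable {α : Type*} {m n : ℕ}

lemma exists_gridGraph_midpoint {s : ℕ} (z : Fin (m + 1) × Fin (n + 1))
    (hz : (z.1 + z.2 : ℕ) = 2 * s) :
    ∃ w : Fin (m + 1) × Fin (n + 1), (w.1 + w.2 : ℕ) = s ∧
      (gridGraph (m + 1) (n + 1)).dist w z = s := by
  refine ⟨(⟨min s z.1, by omega⟩, ⟨s - min s z.1, by omega⟩), ?_, ?_⟩
  · simp only; omega
  · simp only [dist_gridGraph]; omega

-- `y` is reached from `x` by one step towards an axis and `s + 1` steps away from the other.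
lemma exists_dist_eq_of_levels {s : ℕ} (hs : 2 * s + 2 ≤ m + n) :
    ∃ x y : Fin (m + 2) × Fin (n + 2), (x.1 + x.2 : ℕ) = s + 2 ∧ (y.1 + y.2 : ℕ) = 2 * s + 2 ∧
      (gridGraph (m + 2) (n + 2)).dist x y = s + 2 := by
  simp only [dist_gridGraph]
  rcases le_or_gt s n with hsn | hsn
  · refine ⟨(⟨min (s + 2) (m + 1), by omega⟩, ⟨s + 2 - min (s + 2) (m + 1), by omega⟩),
      (⟨min (s + 2) (m + 1) - 1, by omega⟩, ⟨2 * s + 3 - min (s + 2) (m + 1), by omega⟩), ?_⟩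
    simp only
    omega
  · refine ⟨(⟨s + 2 - min (s + 2) (n + 1), by omega⟩, ⟨min (s + 2) (n + 1), by omega⟩),
      (⟨2 * s + 3 - min (s + 2) (n + 1), by omega⟩, ⟨min (s + 2) (n + 1) - 1, by omega⟩), ?_⟩
    simp only
    omega

lemma IsUniquelyColored.color_eq_of_even {c : Fin (m + 2) × Fin (n + 2) → α}
    (h0 : IsUniquelyColored c 0) (hc : ¬ HasRainbowAP (gridGraph (m + 2) (n + 2)) 3 c)
    {z : Fin (m + 2) × Fin (n + 2)} (hz : z ≠ 0) (heven : Even (z.1 + z.2 : ℕ)) : c z = c 1 := by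
  have ne_zero {x : Fin (m + 2) × Fin (n + 2)} : 0 < (x.1 + x.2 : ℕ) → x ≠ 0 := level_pos_iff.1
  have key (s : ℕ) (z : Fin (m + 2) × Fin (n + 2)) (hz : (z.1 + z.2 : ℕ) = 2 * s + 2) :
      c z = c 1 := by
    induction s generalizing z with
    | zero =>
      refine h0.color_eq_of_dist_eq hc (ne_zero (by omega)) (ne_zero (by simp)) ?_
      simp [dist_gridGraph_zero_left, hz]
    | succ s ih =>
      obtain ⟨w, hw, hwz⟩ := exists_gridGraph_midpoint (s := s + 2) z (by omega)
      obtain ⟨x, y, hx, hy, hxy⟩ := exists_dist_eq_of_levels (m := m) (n := n) (s := s) (by omega)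
      have hw0 := ne_zero (x := w) (by omega)
      have hx0 := ne_zero (x := x) (by omega)
      calc c z = c w := (h0.color_eq_of_dist_eq_dist hc hw0 (ne_zero (by omega))
            (by rw [dist_gridGraph_zero_left, hw, hwz])).symm
        _ = c x := h0.color_eq_of_dist_eq hc hw0 hx0
            (by rw [dist_gridGraph_zero_left, dist_gridGraph_zero_left, hw, hx])
        _ = c y := h0.color_eq_of_dist_eq_dist hc hx0 (ne_zero (by omega))
            (by rw [dist_gridGraph_zero_left, hx, hxy])
        _ = c 1 := ih y hy
  obtain ⟨s, hs⟩ := heven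
  have hpos := level_pos_iff.2 hz
  exact key (s - 1) z (by omega)

lemma color_eq_one_of_opposite_corners {c : Fin (m + 3) × Fin (n + 2) → α}
    (hc : ¬ HasRainbowAP (gridGraph (m + 3) (n + 2)) 3 c) (h0 : IsUniquelyColored c 0)
    (hlast : IsUniquelyColored c (Fin.last _, Fin.last _)) {z : Fin (m + 3) × Fin (n + 2)}
    (hz0 : z ≠ 0) (hz : z ≠ (Fin.last _, Fin.last _)) : c z = c 1 := by
  have heven_dim : Even (m + n) := by
    by_contra hodd_dim
    have hcolor : c (Fin.last _, Fin.last _) = c 1 := by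
      refine h0.color_eq_of_even hc (by simp [Prod.ext_iff]) ?_
      rw [Nat.even_iff] at hodd_dim ⊢
      simp only [Fin.val_last]
      omega
    simpa [Fin.ext_iff] using congrArg Prod.fst (hlast 1 hcolor.symm)
  let ρ : Fin (m + 3) × Fin (n + 2) → Fin (m + 3) × Fin (n + 2) := Prod.map Fin.rev Fin.rev
  have hρ : Function.Involutive ρ := Fin.rev_involutive.prodMap Fin.rev_involutive
  have hρ_last : ρ (Fin.last _, Fin.last _) = 0 := by simp [ρ]
  have hρc : ¬ HasRainbowAP (gridGraph (m + 3) (n + 2)) 3 (c ∘ ρ) :=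
    mt (.of_comp_right (dist_gridGraph_prodMap natAbs_rev_sub_rev natAbs_rev_sub_rev)) hc
  have hρ0 : IsUniquelyColored (c ∘ ρ) 0 := hlast.comp hρ.injective (by rw [← hρ_last, hρ])
  have color_odd {w : Fin (m + 3) × Fin (n + 2)} (hw : w ≠ (Fin.last _, Fin.last _))
      (hw' : Odd (w.1 + w.2 : ℕ)) : c w = c (ρ 1) := by
    have hw_even : Even ((ρ w).1 + (ρ w).2 : ℕ) := by
      simp only [ρ, Prod.map_fst, Prod.map_snd, Fin.val_rev]
      rw [Nat.even_iff] at heven_dim ⊢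
      rw [Nat.odd_iff] at hw'
      omega
    have hcolor := hρ0.color_eq_of_even hρc (hρ_last ▸ hρ.injective.ne hw) hw_even
    rwa [Function.comp_apply, hρ] at hcolor
  have h01 : c (0, 1) = c 1 :=
    h0.color_eq_of_dist_eq_dist hc (by simp [Prod.ext_iff])
      (by simp [Prod.ext_iff]) (by simp [dist_gridGraph])
  rcases Nat.even_or_odd (z.1 + z.2 : ℕ) with heven | hodd
  · exact h0.color_eq_of_even hc hz0 heven
  · rw [← h01, color_odd hz hodd, color_odd (w := (0, 1)) (by simp [Fin.ext_iff]) (by simp)]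

lemma ncard_range_le_three_of_opposite_corners {c : Fin (m + 3) × Fin (n + 2) → α}
    (hc : ¬ HasRainbowAP (gridGraph (m + 3) (n + 2)) 3 c) (h0 : IsUniquelyColored c 0)
    (hlast : IsUniquelyColored c (Fin.last _, Fin.last _)) : (Set.range c).ncard ≤ 3 := by
  classical
  have hsub : Set.range c ⊆ ({c 0, c (Fin.last _, Fin.last _), c 1} : Finset α) := by
    rintro _ ⟨z, rfl⟩
    by_cases hz0 : z = 0
    · simp [hz0]
    by_cases hz : z = (Fin.last _, Fin.last _)
    · simp [hz]
    · simp [color_eq_one_of_opposite_corners hc h0 hlast hz0 hz]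
  exact (Set.ncard_le_ncard hsub).trans ((Set.ncard_coe_finset _).trans_le Finset.card_le_three)

-- Otherwise some `v` strictly between the extreme rows is as far from `t` as `b` is, or as far
-- from `b` as `t` is, and `t`, `b`, `v` form a rainbow progression.
lemma eq_opposite_corners {c : Fin (m + 3) × Fin (n + 2) → α}
    (hc : ¬ HasRainbowAP (gridGraph (m + 3) (n + 2)) 3 c) {t b : Fin (m + 3) × Fin (n + 2)}
    (ht : ∀ x, c x = c t → x.1 = 0) (hb : ∀ x, c x = c b → x.1 = Fin.last _) :
    t = (0, 0) ∧ b = (Fin.last _, Fin.last _) ∨ t = (0, Fin.last _) ∧ b = (Fin.last _, 0) := by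
  have ht0 := ht t rfl
  have hb0 := hb b rfl
  have htb : c t ≠ c b := fun h ↦ by simpa [ht0] using hb t h
  have dist_ne (v : Fin (m + 3) × Fin (n + 2)) (hv0 : v.1 ≠ 0) (hv : v.1 ≠ Fin.last _) :
      (gridGraph _ _).dist b t ≠ (gridGraph _ _).dist t v ∧
        (gridGraph _ _).dist t b ≠ (gridGraph _ _).dist b v := by
    have htv : c v ≠ c t := mt (ht v) hv0
    have hbv : c v ≠ c b := mt (hb v) hv
    rw [not_hasRainbowAP_three_iff] at hc
    exact ⟨by grind, by grind⟩
  have column_ne (j : ℕ) (hj : j < n + 2) :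
      ((t.2 : ℤ) - j).natAbs ≠ ((t.2 : ℤ) - b.2).natAbs + 1 ∧
        ((b.2 : ℤ) - j).natAbs ≠ ((t.2 : ℤ) - b.2).natAbs + 1 := by
    have h1 := (dist_ne (⟨m + 1, by omega⟩, ⟨j, hj⟩) (by simp [Fin.ext_iff])
      (by simp [Fin.ext_iff])).1
    have h2 := (dist_ne (⟨1, by omega⟩, ⟨j, hj⟩) (by simp) (by simp [Fin.ext_iff])).2
    simp only [dist_gridGraph, ht0, hb0, Fin.val_zero, Fin.val_last] at h1 h2
    omega
  have hcorner : (t.2 : ℕ) = 0 ∧ (b.2 : ℕ) = n + 1 ∨ (t.2 : ℕ) = n + 1 ∧ (b.2 : ℕ) = 0 := by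
    set d := ((t.2 : ℤ) - b.2).natAbs
    -- The columns at distance `d + 1` from those of `t` and `b` lie outside the grid.
    have ht_right := column_ne (t.2 + (d + 1))
    have ht_left := column_ne (t.2 - (d + 1))
    have hb_right := column_ne (b.2 + (d + 1))
    have hb_left := column_ne (b.2 - (d + 1))
    omega
  exact hcorner.imp (fun h ↦ ⟨Prod.ext ht0 (Fin.ext h.1), Prod.ext hb0 (Fin.ext h.2)⟩)
    fun h ↦ ⟨Prod.ext ht0 (Fin.ext h.1), Prod.ext hb0 (Fin.ext h.2)⟩

end OppositeCorners

section UpperBound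

variable {α : Type*} {m n : ℕ}

lemma ncard_range_le_three_of_rows {c : Fin (m + 3) × Fin (n + 2) → α}
    (hc : ¬ HasRainbowAP (gridGraph (m + 3) (n + 2)) 3 c) {t b : Fin (m + 3) × Fin (n + 2)}
    (ht : ∀ x, c x = c t → x.1 = 0) (hb : ∀ x, c x = c b → x.1 = Fin.last _) :
    (Set.range c).ncard ≤ 3 := by
  have hcorners := eq_opposite_corners hc ht hb
  have hut : IsUniquelyColored c t := fun x hx ↦ by
    have := eq_opposite_corners hc (t := x) (by rwa [hx]) hb
    aesop
  have hub : IsUniquelyColored c b := fun x hx ↦ by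
    have := eq_opposite_corners hc (b := x) ht (by rwa [hx])
    aesop
  rcases hcorners with ⟨rfl, rfl⟩ | ⟨rfl, rfl⟩
  · exact ncard_range_le_three_of_opposite_corners hc hut hub
  · let φ : Fin (m + 3) × Fin (n + 2) → Fin (m + 3) × Fin (n + 2) := Prod.map id Fin.rev
    have hφ : Function.Bijective φ := Function.bijective_id.prodMap Fin.rev_bijective
    rw [← hφ.surjective.range_comp]
    exact ncard_range_le_three_of_opposite_corners
      (mt (.of_comp_right (dist_gridGraph_prodMap (fun _ _ ↦ rfl) natAbs_rev_sub_rev)) hc)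
      (hut.comp hφ.injective (by simp [φ, Prod.ext_iff])) (hub.comp hφ.injective (by simp [φ]))

lemma exists_color_only_outside_range {V W : Type*} [Finite W] {c : V → α} {φ : W → V} {r : ℕ}
    (hφ : (Set.range (c ∘ φ)).ncard ≤ r) (hr : r < (Set.range c).ncard) :
    ∃ v, ∀ x, c x = c v → x ∉ Set.range φ := by
  obtain ⟨_, ⟨v, rfl⟩, hv⟩ := Set.exists_mem_notMem_of_ncard_lt_ncard (hφ.trans_lt hr)
  refine ⟨v, ?_⟩
  rintro _ hx ⟨w, rfl⟩
  exact hv ⟨w, hx⟩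

lemma ncard_range_le_three_succ
    (ih : ∀ c : Fin (m + 2) × Fin (n + 2) → α,
      ¬ HasRainbowAP (gridGraph (m + 2) (n + 2)) 3 c → (Set.range c).ncard ≤ 3)
    (c : Fin (m + 3) × Fin (n + 2) → α) (hc : ¬ HasRainbowAP (gridGraph (m + 3) (n + 2)) 3 c) :
    (Set.range c).ncard ≤ 3 := by
  by_contra! hcard
  obtain ⟨t, ht⟩ := exists_color_only_outside_range (φ := Prod.map Fin.succ id)
    (ih _ (mt (.of_comp_right (dist_gridGraph_prodMap natAbs_succ_sub_succ fun _ _ ↦ rfl)) hc))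
    hcard
  obtain ⟨b, hb⟩ := exists_color_only_outside_range (φ := Prod.map Fin.castSucc id)
    (ih _ (mt (.of_comp_right (dist_gridGraph_prodMap (fun _ _ ↦ rfl) fun _ _ ↦ rfl)) hc)) hcard
  refine hcard.not_ge (ncard_range_le_three_of_rows hc (t := t) (b := b) ?_ ?_)
  · intro x hx
    by_contra h0
    obtain ⟨i, hi⟩ := Fin.exists_succ_eq.2 h0
    exact ht x hx ⟨(i, x.2), Prod.ext hi rfl⟩
  · intro x hx
    by_contra hlast
    obtain ⟨i, hi⟩ := Fin.exists_castSucc_eq.2 hlast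
    exact hb x hx ⟨(i, x.2), Prod.ext hi rfl⟩

lemma ncard_range_le_three_two_by_two {c : Fin 2 × Fin 2 → α}
    (hc : ¬ HasRainbowAP (gridGraph 2 2) 3 c) : (Set.range c).ncard ≤ 3 := by
  by_contra! hcard
  have hinj : Function.Injective c := by
    rw [← Set.image_univ] at hcard
    refine Set.injOn_univ.1 (Set.injOn_of_ncard_image_eq (le_antisymm Set.ncard_image_le ?_))
    simpa [Set.ncard_univ] using Nat.succ_le_of_lt hcard
  have := not_hasRainbowAP_three_iff.1 hc (0, 1) (0, 0) (1, 0) (by simp [dist_gridGraph])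
  simp [hinj.eq_iff] at this

theorem ncard_range_le_three (m n : ℕ) {c : Fin (m + 2) × Fin (n + 2) → α}
    (hc : ¬ HasRainbowAP (gridGraph (m + 2) (n + 2)) 3 c) : (Set.range c).ncard ≤ 3 := by
  induction m generalizing n with
  | zero =>
    induction n with
    | zero => exact ncard_range_le_three_two_by_two hc
    | succ n ih =>
      rw [← Prod.swap_surjective.range_comp]
      refine ncard_range_le_three_succ (fun c' hc' ↦ ?_) _
        (mt (.of_comp_right dist_gridGraph_swap) hc)
      rw [← Prod.swap_surjective.range_comp]
      exact ih (mt (.of_comp_right dist_gridGraph_swap) hc')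
  | succ m ih => exact ncard_range_le_three_succ (fun _ ↦ ih n) c hc

lemma hasRainbowAP_gridGraph_of_surjective (hm : 2 ≤ m) (hn : 2 ≤ n) {c : Fin m × Fin n → Fin 4}
    (hsurj : Function.Surjective c) : HasRainbowAP (gridGraph m n) 3 c := by
  obtain ⟨m, rfl⟩ := Nat.exists_eq_add_of_le' hm
  obtain ⟨n, rfl⟩ := Nat.exists_eq_add_of_le' hn
  by_contra hc
  have := ncard_range_le_three m n hc
  simp [hsurj.range_eq] at this

end UpperBound

section LowerBound

variable {m n : ℕ}

lemma dist_gridGraph_ne_of_odd {x z : Fin m × Fin n} (h : Odd ((gridGraph m n).dist x z))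
    (y : Fin m × Fin n) : (gridGraph m n).dist x y ≠ (gridGraph m n).dist y z := by
  obtain ⟨s, hs⟩ := h
  simp only [dist_gridGraph] at hs ⊢
  omega

lemma sphereColoring_gridGraph_surjective {D : ℕ} (hodd : Odd D) (hle : D ≤ m + n + 2)
    (hge : m < D) : Function.Surjective (sphereColoring (gridGraph (m + 2) (n + 2)) 0 D) := by
  have hlevel : (gridGraph (m + 2) (n + 2)).dist 0 (Fin.last _, ⟨D - (m + 1), by omega⟩) = D := by
    rw [dist_gridGraph_zero_left, Fin.val_last]
    exact Nat.add_sub_of_le hge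
  refine sphereColoring_surjective (by simp) hlevel (y := 1) (by simp [Prod.ext_iff]) fun h ↦ ?_
  rw [← h, dist_gridGraph_zero_left] at hodd
  exact absurd hodd (by simp)

lemma not_hasRainbowAP_sphereColoring_gridGraph {D : ℕ} (hodd : Odd D)
    (hD : D = m + n + 2 ∨ D = m + n + 1 ∧ 2 ≤ m ∧ 2 ≤ n) :
    ¬ HasRainbowAP (gridGraph (m + 2) (n + 2)) 3
      (sphereColoring (gridGraph (m + 2) (n + 2)) 0 D) := by
  refine not_hasRainbowAP_sphereColoring (fun y z hz ↦ dist_gridGraph_ne_of_odd (hz ▸ hodd) y)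
    fun y z hy hyz ↦ .inl ?_
  rw [← not_ne_iff, ← level_pos_iff]
  rw [dist_gridGraph_zero_left] at hy
  rw [dist_gridGraph] at hyz
  omega

lemma three_lt_aw_gridGraph {D : ℕ} (hodd : Odd D)
    (hD : D = m + n + 2 ∨ D = m + n + 1 ∧ 2 ≤ m ∧ 2 ≤ n) :
    3 < aw (gridGraph (m + 2) (n + 2)) 3 :=
  lt_aw (sphereColoring_gridGraph_surjective hodd (by omega) (by omega))
    (not_hasRainbowAP_sphereColoring_gridGraph hodd hD)

end LowerBound

theorem aw_eq_four_big_general (m n : ℕ) (hm : 2 ≤ m) (hn : 2 ≤ n)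
    (h : Odd (m + n) ∨ 4 ≤ m ∧ 4 ≤ n) : aw (pathGraph m □ pathGraph n) 3 = 4 := by
  apply le_antisymm
  · exact aw_le four_pos fun _ ↦ hasRainbowAP_gridGraph_of_surjective hm hn
  · obtain ⟨m, rfl⟩ := Nat.exists_eq_add_of_le' hm
    obtain ⟨n, rfl⟩ := Nat.exists_eq_add_of_le' hn
    rcases Nat.even_or_odd (m + n) with heven | hodd
    · exact three_lt_aw_gridGraph heven.add_one (by grind)
    · exact three_lt_aw_gridGraph (hodd.add_even even_two) (.inl rfl)

/-- if `m, n ≥ 4`, then `aw(P_m □ P_n, 3) = 4`. -/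
theorem aw_eq_four_big (m n : ℕ) (hm : 4 ≤ m) (hn : 4 ≤ n) :
    aw (pathGraph m □ pathGraph n) 3 = 4 :=
  aw_eq_four_big_general m n (by omega) (by omega) (.inr ⟨hm, hn⟩)
end
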